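/- Let g be a Riemannian metric on ℝ² \ B̄(0,1) asymptotic to the flat cone metric dr² + P²r²dθ² with error in O₂(r^{−2ε}), ε > 0. Then the total geodesic curvature of the circle γ_R = {r = R} with respect to g satisfies ∫_{γ_R} κ_g ds_g → 2πP as R → ∞. -/

import Mathlib

open Real MeasureTheory Filter Topology Matrix
open scoped BigOperators

noncomputable section

/-- Points of the plane. -/
abbrev Pt := ℝ × ℝ

/-- A (coordinate expression of a) metric on (a subset of) the plane:
a field of `2 × 2` matrices. -/
abbrev Met := Pt → Matrix (Fin 2) (Fin 2) ℝ

/-- Euclidean radius of a point of the plane. -/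
def rad (p : Pt) : ℝ := Real.sqrt (p.1 ^ 2 + p.2 ^ 2)

/-- The standard coordinate directions. -/
def e2 : Fin 2 → Pt := ![(1, 0), (0, 1)]

/-- Partial derivative in the `i`-th coordinate direction. -/
def pd (i : Fin 2) (f : Pt → ℝ) (p : Pt) : ℝ := fderiv ℝ f p (e2 i)

/-- Second partial derivatives. -/
def pd2 (i j : Fin 2) (f : Pt → ℝ) (p : Pt) : ℝ := pd i (fun q => pd j f q) p

/-- Christoffel symbols `Γ^k_{ij}` of the Levi-Civita connection of `g`. -/
def christoffel (g : Met) (k i j : Fin 2) (p : Pt) : ℝ :=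
  (1 / 2) * ∑ l : Fin 2, (g p)⁻¹ k l *
    (pd i (fun q => g q l j) p + pd j (fun q => g q l i) p - pd l (fun q => g q i j) p)

/-- Curvature tensor `R^l_{ijk}` of the Levi-Civita connection of `g`. -/
def riem (g : Met) (l i j k : Fin 2) (p : Pt) : ℝ :=
  pd i (fun q => christoffel g l j k q) p - pd j (fun q => christoffel g l i k q) p
    + ∑ m : Fin 2, (christoffel g l i m p * christoffel g m j k p
        - christoffel g l j m p * christoffel g m i k p)

/-- Gaussian curvature `K = R_{0101} / det g`. -/
def gaussCurv (g : Met) (p : Pt) : ℝ :=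
  (∑ l : Fin 2, g p 0 l * riem g l 1 0 1 p) / (g p).det

/-- Scalar curvature of a two-dimensional metric: twice the Gaussian curvature. -/
def scalCurv (g : Met) (p : Pt) : ℝ := 2 * gaussCurv g p

/-- The inner product of two tangent vectors with respect to `g` at `p`. -/
def innerG (g : Met) (p : Pt) (u v : Fin 2 → ℝ) : ℝ :=
  ∑ i : Fin 2, ∑ j : Fin 2, g p i j * u i * v j

/-- The length of a tangent vector with respect to `g` at `p`. -/
def normG (g : Met) (p : Pt) (u : Fin 2 → ℝ) : ℝ := Real.sqrt (innerG g p u u)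

/-- Velocity (coordinate derivative) of a curve in the plane. -/
def vel (c : ℝ → Pt) (t : ℝ) : Fin 2 → ℝ :=
  ![deriv (fun s => (c s).1) t, deriv (fun s => (c s).2) t]

/-- Covariant acceleration `(∇_{c'} c')^k` of a curve with respect to `g`. -/
def accel (g : Met) (c : ℝ → Pt) (t : ℝ) : Fin 2 → ℝ := fun k =>
  deriv (fun s => vel c s k) t
    + ∑ i : Fin 2, ∑ j : Fin 2, christoffel g k i j (c t) * vel c t i * vel c t j

/-- Rotation by 90 degrees with respect to the metric `g` and the standard
orientation of the plane (`g(Ju, v) = ω(u, v)` for the Riemannian area form `ω`),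
with the sign convention making the outward-oriented Euclidean circle have
geodesic curvature `+1/R`. -/
def Jrot (g : Met) (p : Pt) (u : Fin 2 → ℝ) : Fin 2 → ℝ := fun i =>
  Real.sqrt (g p).det * ∑ k : Fin 2, (g p)⁻¹ i k * (if k = 0 then -u 1 else u 0)

/-- Geodesic curvature of a curve `c` at time `t` with respect to `g`. -/
def geodCurv (g : Met) (c : ℝ → Pt) (t : ℝ) : ℝ :=
  innerG g (c t) (accel g c t) (Jrot g (c t) (vel c t)) / (normG g (c t) (vel c t)) ^ 3

/-- Speed of a curve with respect to `g`. -/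
def speedG (g : Met) (c : ℝ → Pt) (t : ℝ) : ℝ := normG g (c t) (vel c t)

/-- Total geodesic curvature `∫ κ ds` of a curve over the parameter range `[a,b]`. -/
def totalGeodCurv (g : Met) (c : ℝ → Pt) (a b : ℝ) : ℝ :=
  ∫ t in a..b, geodCurv g c t * speedG g c t

/-- The length of a curve with respect to `g`. -/
def lengthG (g : Met) (c : ℝ → Pt) (a b : ℝ) : ℝ := ∫ t in a..b, speedG g c t

/-- The "quasilocal mass" of a loop `c` of period `T`: the angle defect
`2π - ∫_γ κ ds` (equivalently, by Gauss–Bonnet, the angle defect of the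
holonomy of parallel transport around the loop). -/
def qlm (g : Met) (c : ℝ → Pt) (T : ℝ) : ℝ := 2 * π - totalGeodCurv g c 0 T

/-- The round circle of radius `R`. -/
def circleC (R : ℝ) : ℝ → Pt := fun t => (R * Real.cos t, R * Real.sin t)

/-- The flat cone metric of parameter `P`, i.e. `dr² + P²r²dθ²`, written in
Cartesian coordinates: `dx² + dy² - ((1-P²)/(x²+y²)) (x dy - y dx)²`. -/
def coneMetric (P : ℝ) : Met := fun p =>
  !![1 - (1 - P ^ 2) * p.2 ^ 2 / (p.1 ^ 2 + p.2 ^ 2),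
      (1 - P ^ 2) * p.1 * p.2 / (p.1 ^ 2 + p.2 ^ 2);
     (1 - P ^ 2) * p.1 * p.2 / (p.1 ^ 2 + p.2 ^ 2),
      1 - (1 - P ^ 2) * p.1 ^ 2 / (p.1 ^ 2 + p.2 ^ 2)]

/-- The flat cylinder metric `dr² + p²dθ²` (cone parameter `P = 0`),
in Cartesian coordinates on the exterior region. -/
def cylMetric (pc : ℝ) : Met := fun q =>
  !![q.1 ^ 2 / (q.1 ^ 2 + q.2 ^ 2) + pc ^ 2 * q.2 ^ 2 / (q.1 ^ 2 + q.2 ^ 2) ^ 2,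
      q.1 * q.2 / (q.1 ^ 2 + q.2 ^ 2) - pc ^ 2 * q.1 * q.2 / (q.1 ^ 2 + q.2 ^ 2) ^ 2;
     q.1 * q.2 / (q.1 ^ 2 + q.2 ^ 2) - pc ^ 2 * q.1 * q.2 / (q.1 ^ 2 + q.2 ^ 2) ^ 2,
      q.2 ^ 2 / (q.1 ^ 2 + q.2 ^ 2) + pc ^ 2 * q.1 ^ 2 / (q.1 ^ 2 + q.2 ^ 2) ^ 2]

/-- The exterior region `ℝ² \ B̄(0,1)`. -/
def ExtSet : Set Pt := {p | 1 < rad p}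

/-- `g` is a smooth Riemannian metric on `U`. -/
def IsMetricOn (g : Met) (U : Set Pt) : Prop :=
  (∀ i j : Fin 2, ContDiffOn ℝ (⊤ : ℕ∞) (fun p => g p i j) U) ∧
    ∀ p ∈ U, (g p).IsSymm ∧ (g p).PosDef

/-- The decay condition `O₂(r^{-2ε})` for a matrix-valued field, beyond radius `R₀`:
`|f| + r|∂f| + r²|∂²f| ≤ C r^{-2ε}`. -/
def IsO2Decay (h : Pt → Matrix (Fin 2) (Fin 2) ℝ) (ε R₀ : ℝ) : Prop :=
  ∃ C > 0, ∀ p : Pt, R₀ < rad p → ∀ i j : Fin 2,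
    |h p i j| + rad p * ∑ k : Fin 2, |pd k (fun q => h q i j) p|
      + rad p ^ 2 * ∑ k : Fin 2, ∑ l : Fin 2, |pd2 k l (fun q => h q i j) p|
      ≤ C * rad p ^ (-(2 * ε))

/-- `V` is a parallel vector field along the curve `c`, for the Levi-Civita
connection of `g`: `dV^k/dt + Γ^k_{ij} (c')^i V^j = 0`. -/
def IsParallel (g : Met) (c : ℝ → Pt) (V : ℝ → Fin 2 → ℝ) : Prop :=
  ∀ t : ℝ, ∀ k : Fin 2,
    deriv (fun s => V s k) t
      + ∑ i : Fin 2, ∑ j : Fin 2, christoffel g k i j (c t) * vel c t i * V t j = 0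

/-- The holonomy of parallel transport of `g` around the loop `c : [0,T]` is
rotation by the angle `α`: in some positively oriented `g`-orthonormal frame at
the base point, parallel transport acts as the rotation matrix of angle `α`. -/
def IsHolonomyRotation (g : Met) (c : ℝ → Pt) (T α : ℝ) : Prop :=
  ∃ u v : Fin 2 → ℝ,
    innerG g (c 0) u u = 1 ∧ innerG g (c 0) v v = 1 ∧ innerG g (c 0) u v = 0 ∧
    0 < u 0 * v 1 - u 1 * v 0 ∧
    ∃ U V : ℝ → Fin 2 → ℝ, IsParallel g c U ∧ IsParallel g c V ∧
      U 0 = u ∧ V 0 = v ∧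
      (U T = fun k => Real.cos α * u k + Real.sin α * v k) ∧
      (V T = fun k => -Real.sin α * u k + Real.cos α * v k)

/-- The loop `c : [0,T]` winds once (positively) around the point `z`. -/
def WindsOnceAround (c : ℝ → Pt) (T : ℝ) (z : Pt) : Prop :=
  ∃ ρ θ : ℝ → ℝ, Continuous ρ ∧ Continuous θ ∧ (∀ t, 0 < ρ t) ∧
    (∀ t, c t - z = (ρ t * Real.cos (θ t), ρ t * Real.sin (θ t))) ∧
    θ T = θ 0 + 2 * π

/-- `c` is a smooth simple closed curve of period `T`. -/
def IsSimpleClosedCurve (c : ℝ → Pt) (T : ℝ) : Prop :=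
  ContDiff ℝ (⊤ : ℕ∞) c ∧ 0 < T ∧ (∀ t, c (t + T) = c t) ∧
    (∀ t, vel c t ≠ 0) ∧ Set.InjOn c (Set.Ico 0 T)


/-- Jacobian matrix `∂F^i/∂x^j` of a map of the plane. -/
def jac (F : Pt → Pt) (p : Pt) : Matrix (Fin 2) (Fin 2) ℝ := fun i j =>
  pd j (fun q => if i = 0 then (F q).1 else (F q).2) p

/-- Pullback `F*h = Jᵀ (h ∘ F) J` of a metric under a map of the plane. -/
def pullMet (F : Pt → Pt) (h : Met) : Met := fun p =>
  (jac F p)ᵀ * h (F p) * jac F p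

/-- A topological surface, possibly with boundary, given by an atlas of charts
into the closed upper half plane, with smooth transition maps. -/
structure Surface0 where
  M : Type
  ts : TopologicalSpace M
  t2 : @T2Space M ts
  charts : Set (PartialHomeomorph M Pt)
  cover : ∀ x : M, ∃ φ ∈ charts, x ∈ φ.source
  target_eq : ∀ φ ∈ charts, ∃ U : Set Pt, IsOpen U ∧ φ.target = U ∩ {p : Pt | 0 ≤ p.2}
  smooth_trans : ∀ φ ∈ charts, ∀ ψ ∈ charts,
    ContDiffOn ℝ (⊤ : ℕ∞) (ψ ∘ φ.symm) (φ.target ∩ φ.symm ⁻¹' ψ.source)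

attribute [instance] Surface0.ts Surface0.t2

/-- A Riemannian surface: a surface together with, in each chart, a coordinate
expression for the metric, compatible under pullback by transition maps. -/
structure Surface extends Surface0 where
  gM : PartialHomeomorph M Pt → Met
  metric : ∀ φ ∈ charts, IsMetricOn (gM φ) φ.target
  compat : ∀ φ ∈ charts, ∀ ψ ∈ charts, ∀ p ∈ φ.target ∩ φ.symm ⁻¹' ψ.source,
    gM φ p = pullMet (ψ ∘ φ.symm) (gM ψ) p

/-- A distinguished chart at each point. -/
def Surface0.chartAt (S : Surface0) (x : S.M) : PartialHomeomorph S.M Pt :=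
  (S.cover x).choose

lemma Surface0.chartAt_mem (S : Surface0) (x : S.M) : S.chartAt x ∈ S.charts :=
  (S.cover x).choose_spec.1

lemma Surface0.mem_chartAt_source (S : Surface0) (x : S.M) : x ∈ (S.chartAt x).source :=
  (S.cover x).choose_spec.2

/-- The Gaussian curvature of a Riemannian surface, computed in a chart. -/
def Surface.curv (S : Surface) (x : S.M) : ℝ :=
  gaussCurv (S.gM (S.chartAt x)) (S.chartAt x x)

/-- The scalar curvature (twice the Gaussian curvature). -/
def Surface.scal (S : Surface) (x : S.M) : ℝ := 2 * S.curv x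

/-- The boundary of a surface: points mapped by some chart to `{y = 0}`. -/
def Surface0.boundary (S : Surface0) : Set S.M :=
  {x | ∃ φ ∈ S.charts, x ∈ φ.source ∧ (φ x).2 = 0}

/-- A surface is boundaryless if its boundary is empty. -/
def Surface0.Boundaryless (S : Surface0) : Prop := S.boundary = ∅

/-- Orientability: some subatlas covers the surface and has orientation
preserving (positive Jacobian determinant) transition maps. -/
def Surface0.Orientable (S : Surface0) : Prop :=
  ∃ A ⊆ S.charts, (∀ x : S.M, ∃ φ ∈ A, x ∈ φ.source) ∧
    ∀ φ ∈ A, ∀ ψ ∈ A, ∀ p ∈ φ.target ∩ φ.symm ⁻¹' ψ.source,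
      0 < (jac (ψ ∘ φ.symm) p).det

/-- A curve in a surface that is smooth when read in any chart. -/
def Surface0.SmoothCurve (S : Surface0) (c : ℝ → S.M) : Prop :=
  Continuous c ∧ ∀ t : ℝ, ∀ φ ∈ S.charts, c t ∈ φ.source →
    ContDiffAt ℝ (⊤ : ℕ∞) (fun s => φ (c s)) t

/-- The speed of a curve in a surface, using the distinguished chart. -/
def Surface.speed (S : Surface) (c : ℝ → S.M) (t : ℝ) : ℝ :=
  speedG (S.gM (S.chartAt (c t))) (fun s => S.chartAt (c t) (c s)) t

/-- The Riemannian length of a curve in a surface. -/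
def Surface.length (S : Surface) (c : ℝ → S.M) (a b : ℝ) : ℝ :=
  ∫ t in a..b, S.speed c t

/-- The Riemannian distance on a surface. -/
def Surface.dist (S : Surface) (x y : S.M) : ℝ :=
  sInf {L : ℝ | ∃ c : ℝ → S.M, S.toSurface0.SmoothCurve c ∧ c 0 = x ∧ c 1 = y ∧
    L = S.length c 0 1}

/-- Metric completeness of a Riemannian surface: every Cauchy sequence for the
Riemannian distance converges. -/
def Surface.Complete (S : Surface) : Prop :=
  ∀ u : ℕ → S.M,
    (∀ ε > (0:ℝ), ∃ N : ℕ, ∀ m ≥ N, ∀ n ≥ N, S.dist (u m) (u n) < ε) →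
    ∃ x : S.M, ∀ ε > (0:ℝ), ∃ N : ℕ, ∀ n ≥ N, S.dist (u n) x < ε

/-- A homeomorphism of a surface region to a subset of the plane is smooth if it
and its inverse are smooth when read in all charts. -/
def Surface0.SmoothPH (S : Surface0) (f : PartialHomeomorph S.M Pt) : Prop :=
  (∀ φ ∈ S.charts, ContDiffOn ℝ (⊤ : ℕ∞) (f ∘ φ.symm) (φ.target ∩ φ.symm ⁻¹' f.source)) ∧
  (∀ φ ∈ S.charts, ContDiffOn ℝ (⊤ : ℕ∞) (φ ∘ f.symm) (f.target ∩ f.symm ⁻¹' φ.source))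

/-- The surface region `E` is an asymptotically conical end of cone parameter
`P` and decay rate `ε`: it is diffeomorphic to `ℝ² \ B̄(0,1)`, carrying (the
coordinate expression of) the metric `gE` with
`gE - [dx² + dy² - ((1-P²)/(x²+y²))(x dy - y dx)²] ∈ O₂((x²+y²)^{-ε})`. -/
def Surface.IsConicalEnd (S : Surface) (E : Set S.M) (P ε : ℝ) : Prop :=
  ∃ f : PartialHomeomorph S.M Pt, f.source = E ∧ f.target = ExtSet ∧
    S.toSurface0.SmoothPH f ∧
    ∃ gE : Met, IsMetricOn gE ExtSet ∧
      (∀ φ ∈ S.charts, ∀ p ∈ φ.target ∩ φ.symm ⁻¹' E,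
        S.gM φ p = pullMet (f ∘ φ.symm) gE p) ∧
      IsO2Decay (fun p => gE p - coneMetric P p) ε 1

/-- Likewise, an asymptotically cylindrical end: the model is `dr² + p²dθ²`. -/
def Surface.IsCylindricalEnd (S : Surface) (E : Set S.M) (pc ε : ℝ) : Prop :=
  ∃ f : PartialHomeomorph S.M Pt, f.source = E ∧ f.target = ExtSet ∧
    S.toSurface0.SmoothPH f ∧
    ∃ gE : Met, IsMetricOn gE ExtSet ∧
      (∀ φ ∈ S.charts, ∀ p ∈ φ.target ∩ φ.symm ⁻¹' E,
        S.gM φ p = pullMet (f ∘ φ.symm) gE p) ∧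
      IsO2Decay (fun p => gE p - cylMetric pc p) ε 1

/-- The set of connected components of the complement of `K`. -/
def compsOutside (X : Type) [TopologicalSpace X] (K : Set X) : Set (Set X) :=
  {C | ∃ x ∈ Kᶜ, C = connectedComponentIn Kᶜ x}

/-- A surface is asymptotically conical if outside some compact set it has
finitely many connected components, each an asymptotically conical end. -/
def Surface.AsympConical (S : Surface) : Prop :=
  ∃ K : Set S.M, IsCompact K ∧ K ≠ Set.univ ∧
    (compsOutside S.M K).Finite ∧
    ∀ E ∈ compsOutside S.M K, ∃ P > (0:ℝ), ∃ ε > (0:ℝ), S.IsConicalEnd E P ε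

/-- A surface is asymptotically cylindrical if outside some compact set it has
finitely many connected components, each an asymptotically cylindrical end. -/
def Surface.AsympCylindrical (S : Surface) : Prop :=
  ∃ K : Set S.M, IsCompact K ∧ K ≠ Set.univ ∧
    (compsOutside S.M K).Finite ∧
    ∀ E ∈ compsOutside S.M K, ∃ pc > (0:ℝ), ∃ ε > (0:ℝ), S.IsCylindricalEnd E pc ε

/-- A (noncompact) space has exactly one end. -/
def HasOneEnd (X : Type) [TopologicalSpace X] : Prop :=
  (¬ IsCompact (Set.univ : Set X)) ∧
  ∀ K : Set X, IsCompact K → ∃ K' : Set X, IsCompact K' ∧ K ⊆ K' ∧ IsConnected K'ᶜ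

/-- The components of the complement of `K` with noncompact closure. -/
def unbCompsOutside (X : Type) [TopologicalSpace X] (K : Set X) : Set (Set X) :=
  {C | ∃ x ∈ Kᶜ, C = connectedComponentIn Kᶜ x ∧ ¬ IsCompact (closure C)}

/-- A space has exactly `n` ends. -/
def HasEnds (X : Type) [TopologicalSpace X] (n : ℕ) : Prop :=
  ∃ K : Set X, IsCompact K ∧ ∀ K' : Set X, IsCompact K' → K ⊆ K' →
    (unbCompsOutside X K').ncard = n

/-- The Borel σ-algebra on a surface. -/
instance Surface0.ms (S : Surface0) : MeasurableSpace S.M := borel S.M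

/-- `μ` is the Riemannian measure of the surface `S`: in every chart its
pushforward has density `√(det g)` with respect to Lebesgue measure. -/
def Surface.IsRiemMeasure (S : Surface) (μ : Measure S.M) : Prop :=
  ∀ φ ∈ S.charts, ∀ A : Set Pt, MeasurableSet A → A ⊆ φ.target →
    μ (φ.symm '' A) = ∫⁻ p in A, ENNReal.ofReal (Real.sqrt (S.gM φ p).det)

/-- A diffeomorphism from the surface onto the plane. -/
def Surface0.DiffeoToPlane (S : Surface0) : Prop :=
  ∃ f : S.M ≃ₜ Pt,
    (∀ φ ∈ S.charts, ContDiffOn ℝ (⊤ : ℕ∞) (f ∘ φ.symm) φ.target) ∧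
    (∀ φ ∈ S.charts, ContDiffOn ℝ (⊤ : ℕ∞) (φ ∘ f.symm) (f.symm ⁻¹' φ.source))

/-- An isometry (global diffeomorphism pulling the Euclidean metric back to the
given metric) from the surface onto the Euclidean plane. -/
def Surface.IsometricToPlane (S : Surface) : Prop :=
  ∃ f : S.M ≃ₜ Pt,
    (∀ φ ∈ S.charts, ContDiffOn ℝ (⊤ : ℕ∞) (f ∘ φ.symm) φ.target) ∧
    (∀ φ ∈ S.charts, ContDiffOn ℝ (⊤ : ℕ∞) (φ ∘ f.symm) (f.symm ⁻¹' φ.source)) ∧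
    (∀ φ ∈ S.charts, ∀ p ∈ φ.target,
      S.gM φ p = pullMet (f ∘ φ.symm) (fun _ => (1 : Matrix (Fin 2) (Fin 2) ℝ)) p)

/-- The closed unit disc in the plane (Euclidean). -/
def DiscSet : Set Pt := {p : Pt | rad p ≤ 1}

/-- A diffeomorphism from the surface onto the closed unit disc. -/
def Surface0.DiffeoToDisc (S : Surface0) : Prop :=
  ∃ f : S.M ≃ₜ DiscSet,
    (∀ φ ∈ S.charts, ContDiffOn ℝ (⊤ : ℕ∞) (fun p => ((f (φ.symm p) : Pt))) φ.target) ∧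
    ∃ G : Pt → S.M, (∀ p (hp : p ∈ DiscSet), G p = f.symm ⟨p, hp⟩) ∧
      ∀ φ ∈ S.charts, ContDiffOn ℝ (⊤ : ℕ∞) (fun p => φ (G p)) (DiscSet ∩ G ⁻¹' φ.source)

/-- Euler characteristic via finite simplicial complexes: `χ` is an Euler
characteristic of `X` if `X` is homeomorphic to the space of a finite simplicial
complex with alternating face-count sum `χ`. -/
def HasEulerChar (X : Type) [TopologicalSpace X] (χ : ℤ) : Prop :=
  ∃ (n : ℕ) (K : Geometry.SimplicialComplex ℝ (Fin n → ℝ)) (h : K.faces.Finite),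
    Nonempty (X ≃ₜ K.space) ∧
    χ = ∑ s ∈ h.toFinset, (-1 : ℤ) ^ (s.card - 1)

/-- Points of space `ℝ³`. -/
abbrev Pt3 := Fin 3 → ℝ

/-- The cylinder of radius `r` in `ℝ³`. -/
def CylSet (r : ℝ) : Set Pt3 := {v : Pt3 | (v 0) ^ 2 + (v 1) ^ 2 = r ^ 2}

/-- Pullback of the Euclidean metric of `ℝ³` under a map `F : ℝ² → ℝ³`:
`(F*δ)_{ij} = ∑_k ∂_i F^k ∂_j F^k`. -/
def pull32 (F : Pt → Pt3) : Met := fun p i j =>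
  ∑ k : Fin 3, pd i (fun q => F q k) p * pd j (fun q => F q k) p

/-- An isometry from the surface onto the round cylinder of radius `r` in `ℝ³`
(with its induced, i.e. product, metric). -/
def Surface.IsometricToCylinder (S : Surface) (r : ℝ) : Prop :=
  ∃ f : S.M ≃ₜ CylSet r,
    (∀ φ ∈ S.charts, ∀ k : Fin 3,
      ContDiffOn ℝ (⊤ : ℕ∞) (fun p => ((f (φ.symm p) : Pt3) k)) φ.target) ∧
    (∀ φ ∈ S.charts, ∀ p ∈ φ.target,
      S.gM φ p = pull32 (fun q => (f (φ.symm q) : Pt3)) p)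

/-! In the moving frame `ν = (cos t, sin t)`, `τ = (-sin t, cos t)` let `E`, `F`, `G` be the
components `g(ν, ν)`, `g(ν, τ)`, `g(τ, τ)` of the metric on the circle of radius `R`. Lowering the
index of the covariant acceleration by the Koszul formula, and trading its cross product with the
velocity for inner products by the Binet–Cauchy identity, gives
`κ ds = (G + R G_R / 2 - F_t + F G_t / (2 G)) / √(det g) dt`.
The flat cone has the constant components `E = 1`, `F = 0`, `G = P²`, so no derivative of the cone
metric ever has to be computed: `R G_R`, `F_t` and `G_t` are those of the error term, and they tend
to `0` as `R → ∞`, uniformly in `t`. Hence the integrand tends to `P² / P = P` uniformly. -/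

/-! ### Linear algebra of a metric at a point -/

section PointwiseAlgebra

variable (g : Met) (p : Pt)

lemma innerG_eq_dotProduct_mulVec (u w : Fin 2 → ℝ) : innerG g p u w = u ⬝ᵥ g p *ᵥ w := by
  simp only [innerG, dotProduct, mulVec, Fin.sum_univ_two]
  ring

lemma innerG_smul_left (a : ℝ) (u w : Fin 2 → ℝ) :
    innerG g p (a • u) w = a * innerG g p u w := by
  simp only [innerG_eq_dotProduct_mulVec, smul_dotProduct, smul_eq_mul]

lemma innerG_smul_right (a : ℝ) (u w : Fin 2 → ℝ) :
    innerG g p u (a • w) = a * innerG g p u w := by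
  simp only [innerG_eq_dotProduct_mulVec, mulVec_smul, dotProduct_smul, smul_eq_mul]

lemma innerG_neg_left (u w : Fin 2 → ℝ) : innerG g p (-u) w = -innerG g p u w := by
  simp only [innerG_eq_dotProduct_mulVec, neg_dotProduct]

lemma innerG_neg_right (u w : Fin 2 → ℝ) : innerG g p u (-w) = -innerG g p u w := by
  simp only [innerG_eq_dotProduct_mulVec, mulVec_neg, dotProduct_neg]

lemma innerG_sub (h : Met) (u w : Fin 2 → ℝ) :
    innerG (fun q => g q - h q) p u w = innerG g p u w - innerG h p u w := by
  simp only [innerG_eq_dotProduct_mulVec, sub_mulVec, dotProduct_sub]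

variable {g p}

lemma innerG_comm (hsymm : (g p).IsSymm) (u w : Fin 2 → ℝ) :
    innerG g p u w = innerG g p w u := by
  rw [innerG_eq_dotProduct_mulVec, innerG_eq_dotProduct_mulVec, dotProduct_mulVec,
    dotProduct_comm, ← mulVec_transpose, hsymm.eq]

lemma innerG_self_pos (hpos : (g p).PosDef) {u : Fin 2 → ℝ} (hu : u ≠ 0) :
    0 < innerG g p u u := by
  simpa [innerG_eq_dotProduct_mulVec] using hpos.dotProduct_mulVec_pos hu

variable (g p)

lemma innerG_binet_cauchy (u v x y : Fin 2 → ℝ) :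
    innerG g p u x * innerG g p v y - innerG g p u y * innerG g p v x =
      (g p).det * (u 0 * v 1 - u 1 * v 0) * (x 0 * y 1 - x 1 * y 0) := by
  simp only [innerG, Fin.sum_univ_two, det_fin_two]
  ring

variable {g p}

lemma innerG_Jrot (hdet : IsUnit (g p).det) (a u : Fin 2 → ℝ) :
    innerG g p a (Jrot g p u) = √(g p).det * (u 0 * a 1 - u 1 * a 0) := by
  have hJ : Jrot g p u = √(g p).det • ((g p)⁻¹ *ᵥ ![-u 1, u 0]) := by
    ext i
    simp only [Jrot, Pi.smul_apply, smul_eq_mul, mulVec, dotProduct, Fin.sum_univ_two, if_true,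
      one_ne_zero, if_false, cons_val_zero, cons_val_one]
  rw [hJ, innerG_smul_right, innerG_eq_dotProduct_mulVec, mulVec_mulVec, mul_nonsing_inv _ hdet,
    one_mulVec]
  simp only [dotProduct, Fin.sum_univ_two, cons_val_zero, cons_val_one]
  ring

lemma sum_mul_christoffel (hdet : IsUnit (g p).det) (m i j : Fin 2) :
    ∑ k, g p m k * christoffel g k i j p =
      1 / 2 * (pd i (fun q => g q m j) p + pd j (fun q => g q m i) p
        - pd m (fun q => g q i j) p) := by
  set T : Fin 2 → ℝ := fun l =>
    pd i (fun q => g q l j) p + pd j (fun q => g q l i) p - pd l (fun q => g q i j) p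
  have hΓ : (fun k => christoffel g k i j p) = (1 / 2 : ℝ) • ((g p)⁻¹ *ᵥ T) := rfl
  calc ∑ k, g p m k * christoffel g k i j p
      = (g p *ᵥ fun k => christoffel g k i j p) m := rfl
    _ = 1 / 2 * T m := by
      rw [hΓ, mulVec_smul, mulVec_mulVec, mul_nonsing_inv _ hdet, one_mulVec]; rfl

end PointwiseAlgebra

/-! ### First variation of a metric and the Koszul formula -/

/-- The derivative of the metric coefficients in the direction `z`, again as a field of matrices.
It is not covariant: this is the coordinate derivative `z^k ∂_k g_{ij}`. -/
def metDeriv (g : Met) (z : Fin 2 → ℝ) : Met := fun p =>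
  of fun i j => ∑ k, z k * pd k (fun q => g q i j) p

lemma metDeriv_smul (g : Met) (a : ℝ) (z : Fin 2 → ℝ) (p : Pt) :
    metDeriv g (a • z) p = a • metDeriv g z p := by
  ext i j
  simp only [metDeriv, of_apply, Matrix.smul_apply, Pi.smul_apply, smul_eq_mul, Finset.mul_sum,
    mul_assoc]

lemma innerG_metDeriv_smul (g : Met) (a : ℝ) (z : Fin 2 → ℝ) (p : Pt) (u w : Fin 2 → ℝ) :
    innerG (metDeriv g (a • z)) p u w = a * innerG (metDeriv g z) p u w := by
  simp only [innerG_eq_dotProduct_mulVec, metDeriv_smul, smul_mulVec, dotProduct_smul, smul_eq_mul]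

lemma hasDerivAt_comp_of_pd {f : Pt → ℝ} {c : ℝ → Pt} {z : Fin 2 → ℝ} {t : ℝ}
    (hf : DifferentiableAt ℝ f (c t)) (hc : HasDerivAt c (z 0, z 1) t) :
    HasDerivAt (fun s => f (c s)) (∑ k, z k * pd k f (c t)) t := by
  have hz : ((z 0, z 1) : Pt) = ∑ k, z k • e2 k := by
    simp [e2, Fin.sum_univ_two]
  refine (hf.hasFDerivAt.comp_hasDerivAt t hc).congr_deriv ?_
  simp only [hz, map_sum, map_smul, smul_eq_mul, pd]

lemma hasDerivAt_innerG {g : Met} {c : ℝ → Pt} {z : Fin 2 → ℝ} {u w : ℝ → Fin 2 → ℝ}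
    {u' w' : Fin 2 → ℝ} {t : ℝ} (hg : ∀ i j, DifferentiableAt ℝ (fun p => g p i j) (c t))
    (hc : HasDerivAt c (z 0, z 1) t) (hu : HasDerivAt u u' t) (hw : HasDerivAt w w' t) :
    HasDerivAt (fun s => innerG g (c s) (u s) (w s))
      (innerG (metDeriv g z) (c t) (u t) (w t) + innerG g (c t) u' (w t)
        + innerG g (c t) (u t) w') t := by
  have hterm (i j : Fin 2) := ((hasDerivAt_comp_of_pd (hg i j) hc).mul
    (hasDerivAt_pi.1 hu i)).mul (hasDerivAt_pi.1 hw j)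
  refine (HasDerivAt.fun_sum fun i _ => HasDerivAt.fun_sum fun j _ => hterm i j).congr_deriv ?_
  simp only [innerG, metDeriv, of_apply, Pi.mul_apply, Fin.sum_univ_two]
  ring

lemma innerG_accel {g : Met} {c : ℝ → Pt} {t : ℝ} (hdet : IsUnit (g (c t)).det)
    (w : Fin 2 → ℝ) :
    innerG g (c t) w (accel g c t) =
      innerG g (c t) w (fun k => deriv (fun s => vel c s k) t)
        + innerG (metDeriv g (vel c t)) (c t) w (vel c t)
        - 1 / 2 * innerG (metDeriv g w) (c t) (vel c t) (vel c t) := by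
  have hΓ (m i j : Fin 2) := sum_mul_christoffel hdet m i j
  simp only [Fin.sum_univ_two] at hΓ
  simp only [innerG, accel, metDeriv, of_apply, Fin.sum_univ_two]
  generalize vel c t = v
  linear_combination w 0 * (v 0 * v 0 * hΓ 0 0 0 + v 0 * v 1 * hΓ 0 0 1 + v 1 * v 0 * hΓ 0 1 0
      + v 1 * v 1 * hΓ 0 1 1)
    + w 1 * (v 0 * v 0 * hΓ 1 0 0 + v 0 * v 1 * hΓ 1 0 1 + v 1 * v 0 * hΓ 1 1 0
      + v 1 * v 1 * hΓ 1 1 1)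

lemma geodCurv_mul_speedG {g : Met} {c : ℝ → Pt} {t : ℝ} (hpos : (g (c t)).PosDef)
    (hv : vel c t ≠ 0) :
    geodCurv g c t * speedG g c t =
      √(g (c t)).det * (vel c t 0 * accel g c t 1 - vel c t 1 * accel g c t 0)
        / innerG g (c t) (vel c t) (vel c t) := by
  have hvv := innerG_self_pos hpos hv
  have hspeed : normG g (c t) (vel c t) ^ 2 = innerG g (c t) (vel c t) (vel c t) :=
    Real.sq_sqrt hvv.le
  have hspeed0 : normG g (c t) (vel c t) ≠ 0 := (Real.sqrt_pos.2 hvv).ne'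
  rw [geodCurv, speedG, innerG_Jrot hpos.det_pos.ne'.isUnit, ← hspeed]
  field_simp

lemma measurable_innerG {α : Type*} [MeasurableSpace α] {g : Met} {p : α → Pt}
    {u w : α → Fin 2 → ℝ} (hg : ∀ i j, Measurable fun x => g (p x) i j)
    (hu : ∀ i, Measurable fun x => u x i) (hw : ∀ i, Measurable fun x => w x i) :
    Measurable fun x => innerG g (p x) (u x) (w x) :=
  Finset.measurable_fun_sum _ fun i _ => Finset.measurable_fun_sum _ fun j _ =>
    ((hg i j).mul (hu i)).mul (hw j)

lemma measurable_geodCurv_mul_speedG {g : Met} {c : ℝ → Pt} (hc : Measurable c)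
    (hg : ∀ i j, Measurable fun t => g (c t) i j) :
    Measurable fun t => geodCurv g c t * speedG g c t := by
  have hpd (k i j : Fin 2) : Measurable fun t => pd k (fun q => g q i j) (c t) :=
    (measurable_fderiv_apply_const ℝ _ _).comp hc
  have hvel (k : Fin 2) : Measurable fun t => vel c t k := by
    fin_cases k <;> exact measurable_deriv _
  have hdet : Measurable fun t => (g (c t)).det := by
    simp only [det_fin_two]
    exact ((hg 0 0).mul (hg 1 1)).sub ((hg 0 1).mul (hg 1 0))
  have hinv (k l : Fin 2) : Measurable fun t => (g (c t))⁻¹ k l := by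
    simp only [inv_def, Ring.inverse_eq_inv', adjugate_fin_two]
    fin_cases k <;> fin_cases l
    exacts [hdet.inv.mul (hg 1 1), hdet.inv.mul (hg 0 1).neg, hdet.inv.mul (hg 1 0).neg,
      hdet.inv.mul (hg 0 0)]
  have hΓ (k i j : Fin 2) : Measurable fun t => christoffel g k i j (c t) :=
    (Finset.measurable_fun_sum _ fun l _ =>
      (hinv k l).mul (((hpd i l j).add (hpd j l i)).sub (hpd l i j))).const_mul _
  have haccel (k : Fin 2) : Measurable fun t => accel g c t k :=
    (measurable_deriv _).add (Finset.measurable_fun_sum _ fun i _ =>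
      Finset.measurable_fun_sum _ fun j _ => ((hΓ k i j).mul (hvel i)).mul (hvel j))
  have hJrot (i : Fin 2) : Measurable fun t => Jrot g (c t) (vel c t) i :=
    hdet.sqrt.mul (Finset.measurable_fun_sum _ fun k _ => (hinv i k).mul (by
      split_ifs
      exacts [(hvel 1).neg, hvel 0]))
  have hspeed : Measurable fun t => speedG g c t := (measurable_innerG hg hvel hvel).sqrt
  exact ((measurable_innerG hg haccel hJrot).div (hspeed.pow_const 3)).mul hspeed

/-! ### The polar frame along the circles -/

/-- The Euclidean orthonormal frame of polar coordinates at the angle `t`: `polarFrame t 0 = ∂_r`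
is radial and `polarFrame t 1 = r⁻¹ ∂_θ` is angular. -/
def polarFrame (t : ℝ) : Fin 2 → Fin 2 → ℝ :=
  ![![cos t, sin t], ![-sin t, cos t]]

lemma polarFrame_orthonormal (t : ℝ) (a b : Fin 2) :
    polarFrame t a 0 * polarFrame t b 0 + polarFrame t a 1 * polarFrame t b 1 =
      (1 : Matrix (Fin 2) (Fin 2) ℝ) a b := by
  fin_cases a <;> fin_cases b <;> simp [polarFrame, ← sq, mul_comm]

lemma isBoundedUnder_norm_polarFrame {ι : Type*} {l : Filter ι} (θ : ι → ℝ) (a i : Fin 2) :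
    IsBoundedUnder (· ≤ ·) l (norm ∘ fun x => polarFrame (θ x) a i) := by
  refine isBoundedUnder_of ⟨1, fun x => ?_⟩
  fin_cases a <;> fin_cases i <;> simp [polarFrame, abs_cos_le_one, abs_sin_le_one]

lemma polarFrame_cross (t : ℝ) :
    polarFrame t 0 0 * polarFrame t 1 1 - polarFrame t 0 1 * polarFrame t 1 0 = 1 := by
  simp only [polarFrame, cons_val_zero, cons_val_one]
  linear_combination cos_sq_add_sin_sq t

lemma polarFrame_one_ne_zero (t : ℝ) : polarFrame t 1 ≠ 0 := by
  intro h
  simpa [h] using polarFrame_cross t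

lemma polarFrame_add_pi_div_two_zero (t : ℝ) : polarFrame (t + π / 2) 0 = polarFrame t 1 := by
  simp [polarFrame, cos_add_pi_div_two, sin_add_pi_div_two]

lemma polarFrame_add_pi_div_two_one (t : ℝ) : polarFrame (t + π / 2) 1 = -polarFrame t 0 := by
  simp [polarFrame, cos_add_pi_div_two, sin_add_pi_div_two]

lemma hasDerivAt_polarFrame (a : Fin 2) (t : ℝ) :
    HasDerivAt (fun s => polarFrame s a) (polarFrame (t + π / 2) a) t := by
  refine hasDerivAt_pi.2 fun i => ?_
  fin_cases a <;> fin_cases i <;>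
    simp only [polarFrame, cos_add_pi_div_two, sin_add_pi_div_two] <;>
    first
      | exact hasDerivAt_cos t
      | exact hasDerivAt_sin t
      | exact (hasDerivAt_sin t).neg

lemma hasDerivAt_circleC (R t : ℝ) :
    HasDerivAt (circleC R) ((R • polarFrame t 1) 0, (R • polarFrame t 1) 1) t :=
  ((hasDerivAt_cos t).const_mul R).prodMk ((hasDerivAt_sin t).const_mul R)

lemma hasDerivAt_circleC_radius (R t : ℝ) :
    HasDerivAt (fun ρ => circleC ρ t) (polarFrame t 0 0, polarFrame t 0 1) R :=
  (hasDerivAt_mul_const (cos t)).prodMk (hasDerivAt_mul_const (sin t))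

lemma vel_circleC (R t : ℝ) : vel (circleC R) t = R • polarFrame t 1 := by
  ext i
  fin_cases i
  · exact ((hasDerivAt_cos t).const_mul R).deriv
  · exact ((hasDerivAt_sin t).const_mul R).deriv

lemma deriv_vel_circleC (R t : ℝ) (k : Fin 2) :
    deriv (fun s => vel (circleC R) s k) t = ((-R) • polarFrame t 0) k := by
  simp only [vel_circleC]
  have h := hasDerivAt_pi.1 ((hasDerivAt_polarFrame 1 t).const_smul R) k
  rw [polarFrame_add_pi_div_two_one, smul_neg, ← neg_smul] at h
  exact h.deriv

lemma rad_circleC (R t : ℝ) : rad (circleC R t) = |R| := by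
  rw [rad, circleC, mul_pow, mul_pow, ← mul_add, cos_sq_add_sin_sq, mul_one, sqrt_sq_eq_abs]

lemma circleC_mem_extSet {R : ℝ} (hR : 1 < R) (t : ℝ) : circleC R t ∈ ExtSet :=
  (hR.trans_le (le_abs_self R)).trans_eq (rad_circleC R t).symm

lemma isOpen_extSet : IsOpen ExtSet :=
  isOpen_lt continuous_const
    (((continuous_fst.pow 2).add (continuous_snd.pow 2)).sqrt : Continuous rad)

lemma tendsto_circleC_comap_rad :
    Tendsto (fun x : ℝ × ℝ => circleC x.1 x.2) (atTop ×ˢ ⊤) (comap rad atTop) := by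
  simp only [tendsto_comap_iff, Function.comp_def, rad_circleC]
  exact tendsto_abs_atTop_atTop.comp tendsto_fst

/-! ### Components of a metric in the polar frame -/

/-- The components of the metric `g` in the polar frame, at the point with polar coordinates
`(R, t)`. As the angular frame vector has Euclidean length one, `g = dr² + P² r² dθ²` has the
components `1`, `0`, `P²`. -/
def polarCoeff (g : Met) (a b : Fin 2) (R t : ℝ) : ℝ :=
  innerG g (circleC R t) (polarFrame t a) (polarFrame t b)

section PolarCoeff

variable {g : Met} {R t : ℝ}

lemma hasDerivAt_polarCoeff_radius
    (hg : ∀ i j, DifferentiableAt ℝ (fun p => g p i j) (circleC R t)) (a b : Fin 2) :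
    HasDerivAt (fun ρ => polarCoeff g a b ρ t)
      (innerG (metDeriv g (polarFrame t 0)) (circleC R t) (polarFrame t a) (polarFrame t b)) R := by
  refine (hasDerivAt_innerG (c := fun ρ => circleC ρ t) hg (hasDerivAt_circleC_radius R t)
    (hasDerivAt_const R _) (hasDerivAt_const R _)).congr_deriv ?_
  simp [innerG]

lemma hasDerivAt_polarCoeff_angle
    (hg : ∀ i j, DifferentiableAt ℝ (fun p => g p i j) (circleC R t)) (a b : Fin 2) :
    HasDerivAt (fun s => polarCoeff g a b R s)
      (innerG (metDeriv g (R • polarFrame t 1)) (circleC R t) (polarFrame t a) (polarFrame t b)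
        + innerG g (circleC R t) (polarFrame (t + π / 2) a) (polarFrame t b)
        + innerG g (circleC R t) (polarFrame t a) (polarFrame (t + π / 2) b)) t :=
  hasDerivAt_innerG hg (hasDerivAt_circleC R t) (hasDerivAt_polarFrame a t)
    (hasDerivAt_polarFrame b t)

lemma det_eq_polarCoeff (g : Met) (R t : ℝ) :
    (g (circleC R t)).det = polarCoeff g 0 0 R t * polarCoeff g 1 1 R t
      - polarCoeff g 0 1 R t * polarCoeff g 1 0 R t := by
  rw [polarCoeff, polarCoeff, polarCoeff, polarCoeff, innerG_binet_cauchy,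
    polarFrame_cross, mul_one, mul_one]

lemma innerG_polarFrame_zero_accel_circleC
    (hg : ∀ i j, DifferentiableAt ℝ (fun p => g p i j) (circleC R t))
    (hdet : IsUnit (g (circleC R t)).det) :
    innerG g (circleC R t) (polarFrame t 0) (accel g (circleC R) t) =
      R * (deriv (fun s => polarCoeff g 0 1 R s) t - polarCoeff g 1 1 R t
        - R * deriv (fun ρ => polarCoeff g 1 1 ρ t) R / 2) := by
  rw [innerG_accel hdet, funext (deriv_vel_circleC R t), vel_circleC,
    (hasDerivAt_polarCoeff_angle hg 0 1).deriv, (hasDerivAt_polarCoeff_radius hg 1 1).deriv,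
    polarFrame_add_pi_div_two_zero, polarFrame_add_pi_div_two_one]
  simp only [innerG_smul_left, innerG_smul_right, innerG_neg_right, innerG_metDeriv_smul,
    polarCoeff]
  ring

lemma innerG_polarFrame_one_accel_circleC
    (hg : ∀ i j, DifferentiableAt ℝ (fun p => g p i j) (circleC R t))
    (hsymm : (g (circleC R t)).IsSymm) (hdet : IsUnit (g (circleC R t)).det) :
    innerG g (circleC R t) (polarFrame t 1) (accel g (circleC R) t) =
      R * deriv (fun s => polarCoeff g 1 1 R s) t / 2 := by
  rw [innerG_accel hdet, funext (deriv_vel_circleC R t), vel_circleC,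
    (hasDerivAt_polarCoeff_angle hg 1 1).deriv, polarFrame_add_pi_div_two_one]
  simp only [innerG_smul_left, innerG_smul_right, innerG_neg_left, innerG_neg_right,
    innerG_metDeriv_smul, innerG_comm hsymm (polarFrame t 0)]
  ring

lemma geodCurv_circleC_mul_speedG (hR : R ≠ 0)
    (hg : ∀ i j, DifferentiableAt ℝ (fun p => g p i j) (circleC R t))
    (hpos : (g (circleC R t)).PosDef) :
    geodCurv g (circleC R) t * speedG g (circleC R) t =
      (polarCoeff g 1 1 R t + R * deriv (fun ρ => polarCoeff g 1 1 ρ t) R / 2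
        - deriv (fun s => polarCoeff g 0 1 R s) t
        + polarCoeff g 0 1 R t * deriv (fun s => polarCoeff g 1 1 R s) t
          / (2 * polarCoeff g 1 1 R t)) / √(g (circleC R t)).det := by
  have hsymm : (g (circleC R t)).IsSymm := hpos.isHermitian
  have hdet : IsUnit (g (circleC R t)).det := hpos.det_pos.ne'.isUnit
  have hG : 0 < polarCoeff g 1 1 R t := innerG_self_pos hpos (polarFrame_one_ne_zero t)
  have hsqrt : √(g (circleC R t)).det ≠ 0 := (Real.sqrt_pos.2 hpos.det_pos).ne'
  have hdet_sq : √(g (circleC R t)).det ^ 2 = (g (circleC R t)).det :=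
    Real.sq_sqrt hpos.det_pos.le
  have hv : vel (circleC R) t ≠ 0 := by
    rw [vel_circleC]
    exact smul_ne_zero hR (polarFrame_one_ne_zero t)
  have hcross := innerG_binet_cauchy g (circleC R t) (polarFrame t 0) (polarFrame t 1)
    (polarFrame t 1) (accel g (circleC R) t)
  rw [innerG_polarFrame_zero_accel_circleC hg hdet,
    innerG_polarFrame_one_accel_circleC hg hsymm hdet, ← polarCoeff, ← polarCoeff,
    polarFrame_cross, mul_one, ← hdet_sq] at hcross
  rw [geodCurv_mul_speedG hpos hv, vel_circleC, innerG_smul_left, innerG_smul_right, ← polarCoeff]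
  simp only [Pi.smul_apply, smul_eq_mul]
  field_simp
  linear_combination -2 * hcross

end PolarCoeff

/-! ### Asymptotics -/

section Cone

variable {P R : ℝ}

lemma differentiableAt_coneMetric {p : Pt} (hp : p.1 ^ 2 + p.2 ^ 2 ≠ 0) (i j : Fin 2) :
    DifferentiableAt ℝ (fun q => coneMetric P q i j) p := by
  fin_cases i <;> fin_cases j <;>
    simp only [coneMetric, of_apply, Fin.zero_eta, Fin.mk_one, cons_val', cons_val_zero,
      cons_val_one, cons_val_fin_one] <;>
    fun_prop (disch := exact hp)

lemma innerG_coneMetric (P : ℝ) (p : Pt) (u w : Fin 2 → ℝ) :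
    innerG (coneMetric P) p u w = u 0 * w 0 + u 1 * w 1
      - (1 - P ^ 2) * (p.1 * u 1 - p.2 * u 0) * (p.1 * w 1 - p.2 * w 0)
        / (p.1 ^ 2 + p.2 ^ 2) := by
  simp only [innerG, coneMetric, Fin.sum_univ_two, of_apply, cons_val', cons_val_zero, cons_val_one,
    cons_val_fin_one]
  ring

lemma polarCoeff_coneMetric (hR : R ≠ 0) (a b : Fin 2) (t : ℝ) :
    polarCoeff (coneMetric P) a b R t = Matrix.diagonal ![1, P ^ 2] a b := by
  have hsq : (R * cos t) ^ 2 + (R * sin t) ^ 2 = R ^ 2 := by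
    linear_combination R ^ 2 * cos_sq_add_sin_sq t
  have hradial : R * cos t * polarFrame t 0 1 - R * sin t * polarFrame t 0 0 = 0 := by
    simp only [polarFrame, cons_val_zero, cons_val_one]
    ring
  have hangular : R * cos t * polarFrame t 1 1 - R * sin t * polarFrame t 1 0 = R := by
    simp only [polarFrame, cons_val_zero, cons_val_one]
    linear_combination R * cos_sq_add_sin_sq t
  rw [polarCoeff, innerG_coneMetric, circleC, hsq, polarFrame_orthonormal]
  fin_cases a <;> fin_cases b
  · simp [hradial]
  · simp [hradial]
  · simp [hradial]
  · simp only [Fin.mk_one, hangular, one_apply_eq, diagonal_apply_eq, cons_val_one, cons_val_zero]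
    field_simp
    ring

lemma polarCoeff_sub_coneMetric (g : Met) (hR : R ≠ 0) (a b : Fin 2) (t : ℝ) :
    polarCoeff (fun p => g p - coneMetric P p) a b R t =
      polarCoeff g a b R t - Matrix.diagonal ![1, P ^ 2] a b := by
  rw [← polarCoeff_coneMetric hR, polarCoeff, innerG_sub, ← polarCoeff, ← polarCoeff]

lemma deriv_polarCoeff_sub_coneMetric_angle (g : Met) (hR : R ≠ 0) (a b : Fin 2) (t : ℝ) :
    deriv (fun s => polarCoeff (fun p => g p - coneMetric P p) a b R s) t =
      deriv (fun s => polarCoeff g a b R s) t := by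
  simp only [polarCoeff_sub_coneMetric g hR, deriv_sub_const_fun]

lemma deriv_polarCoeff_sub_coneMetric_radius (g : Met) (hR : R ≠ 0) (a b : Fin 2) (t : ℝ) :
    deriv (fun ρ => polarCoeff (fun p => g p - coneMetric P p) a b ρ t) R =
      deriv (fun ρ => polarCoeff g a b ρ t) R := by
  have heq : (fun ρ => polarCoeff (fun p => g p - coneMetric P p) a b ρ t) =ᶠ[𝓝 R]
      fun ρ => polarCoeff g a b ρ t - Matrix.diagonal ![1, P ^ 2] a b := by
    filter_upwards [isOpen_ne.mem_nhds hR] with ρ hρ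
    exact polarCoeff_sub_coneMetric g hρ a b t
  rw [heq.deriv_eq, deriv_sub_const_fun]

end Cone

/-- The decay `h = o₁(1)` at infinity: both `|h|` and `r |∂h|` tend to `0` as `r → ∞`. -/
def IsLittleO1Decay (h : Met) : Prop :=
  ∀ i j, Tendsto (fun p => h p i j) (comap rad atTop) (𝓝 0) ∧
    ∀ k, Tendsto (fun p => rad p * pd k (fun q => h q i j) p) (comap rad atTop) (𝓝 0)

lemma IsO2Decay.isLittleO1Decay {h : Met} {ε R₀ : ℝ} (hε : 0 < ε) (hh : IsO2Decay h ε R₀) :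
    IsLittleO1Decay h := by
  obtain ⟨C, -, hC⟩ := hh
  have hbound : Tendsto (fun p => C * rad p ^ (-(2 * ε))) (comap rad atTop) (𝓝 0) := by
    simpa using ((tendsto_rpow_neg_atTop (by positivity : 0 < 2 * ε)).comp
      tendsto_comap).const_mul C
  have hfar : ∀ᶠ p in comap rad atTop, R₀ < rad p := tendsto_comap.eventually_gt_atTop R₀
  refine fun i j => ⟨squeeze_zero_norm' ?_ hbound, fun k => squeeze_zero_norm' ?_ hbound⟩ <;>
    filter_upwards [hfar] with p hp <;>
    refine le_trans ?_ (hC p hp i j)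
  all_goals
    have hrad : 0 ≤ rad p := Real.sqrt_nonneg _
    have hsecond : 0 ≤ rad p ^ 2 * ∑ k, ∑ l, |pd2 k l (fun q => h q i j) p| := by positivity
  · have hfirst : 0 ≤ rad p * ∑ k, |pd k (fun q => h q i j) p| := by positivity
    rw [Real.norm_eq_abs]
    linarith
  · have hpd : |pd k (fun q => h q i j) p| ≤ ∑ k, |pd k (fun q => h q i j) p| :=
      Finset.single_le_sum (fun k _ => abs_nonneg (pd k (fun q => h q i j) p)) (Finset.mem_univ k)
    rw [norm_mul, Real.norm_of_nonneg hrad, Real.norm_eq_abs]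
    linarith [mul_le_mul_of_nonneg_left hpd hrad, abs_nonneg (h p i j)]

lemma tendsto_innerG_zero {ι : Type*} {l : Filter ι} {m : ι → Met} {p : ι → Pt}
    {u w : ι → Fin 2 → ℝ} (hm : ∀ i j, Tendsto (fun x => m x (p x) i j) l (𝓝 0))
    (hu : ∀ i, IsBoundedUnder (· ≤ ·) l (norm ∘ fun x => u x i))
    (hw : ∀ i, IsBoundedUnder (· ≤ ·) l (norm ∘ fun x => w x i)) :
    Tendsto (fun x => innerG (m x) (p x) (u x) (w x)) l (𝓝 0) := by
  have hterm (i j : Fin 2) : Tendsto (fun x => m x (p x) i j * u x i * w x j) l (𝓝 0) :=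
    ((hm i j).zero_mul_isBoundedUnder_le (hu i)).zero_mul_isBoundedUnder_le (hw j)
  have hsum := tendsto_finsetSum Finset.univ fun i _ =>
    tendsto_finsetSum Finset.univ fun j _ => hterm i j
  rwa [Finset.sum_const_zero, Finset.sum_const_zero] at hsum

lemma IsLittleO1Decay.tendsto_circleC {h : Met} (hh : IsLittleO1Decay h) (i j : Fin 2) :
    Tendsto (fun x : ℝ × ℝ => h (circleC x.1 x.2) i j) (atTop ×ˢ ⊤) (𝓝 0) :=
  (hh i j).1.comp tendsto_circleC_comap_rad

lemma IsLittleO1Decay.tendsto_metDeriv_circleC {h : Met} (hh : IsLittleO1Decay h) (a i j : Fin 2) :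
    Tendsto (fun x : ℝ × ℝ => metDeriv h (x.1 • polarFrame x.2 a) (circleC x.1 x.2) i j)
      (atTop ×ˢ ⊤) (𝓝 0) := by
  have hterm (k : Fin 2) := (((hh i j).2 k).comp
    tendsto_circleC_comap_rad).zero_mul_isBoundedUnder_le
      (isBoundedUnder_norm_polarFrame Prod.snd a k)
  have hsum := tendsto_finsetSum Finset.univ fun k _ => hterm k
  rw [Finset.sum_const_zero] at hsum
  refine hsum.congr' ?_
  filter_upwards [tendsto_fst.eventually_ge_atTop 0] with x hx
  simp only [metDeriv, of_apply, Function.comp_def, rad_circleC, abs_of_nonneg hx, Pi.smul_apply,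
    smul_eq_mul]
  exact Finset.sum_congr rfl fun k _ => by ring

lemma IsLittleO1Decay.tendsto_polarCoeff {h : Met} (hh : IsLittleO1Decay h) (a b : Fin 2) :
    Tendsto (fun x : ℝ × ℝ => polarCoeff h a b x.1 x.2) (atTop ×ˢ ⊤) (𝓝 0) :=
  tendsto_innerG_zero hh.tendsto_circleC (isBoundedUnder_norm_polarFrame Prod.snd a)
    (isBoundedUnder_norm_polarFrame Prod.snd b)

lemma IsLittleO1Decay.tendsto_mul_deriv_polarCoeff_radius {h : Met} (hh : IsLittleO1Decay h)
    (hdiff : ∀ p ∈ ExtSet, ∀ i j, DifferentiableAt ℝ (fun q => h q i j) p) (a b : Fin 2) :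
    Tendsto (fun x : ℝ × ℝ => x.1 * deriv (fun ρ => polarCoeff h a b ρ x.2) x.1)
      (atTop ×ˢ ⊤) (𝓝 0) := by
  have hlim := tendsto_innerG_zero (hh.tendsto_metDeriv_circleC 0)
    (isBoundedUnder_norm_polarFrame Prod.snd a) (isBoundedUnder_norm_polarFrame Prod.snd b)
  refine hlim.congr' ?_
  filter_upwards [tendsto_fst.eventually_gt_atTop 1] with x hx
  rw [(hasDerivAt_polarCoeff_radius (hdiff _ (circleC_mem_extSet hx x.2)) a b).deriv,
    innerG_metDeriv_smul]

lemma IsLittleO1Decay.tendsto_deriv_polarCoeff_angle {h : Met} (hh : IsLittleO1Decay h)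
    (hdiff : ∀ p ∈ ExtSet, ∀ i j, DifferentiableAt ℝ (fun q => h q i j) p) (a b : Fin 2) :
    Tendsto (fun x : ℝ × ℝ => deriv (fun s => polarCoeff h a b x.1 s) x.2)
      (atTop ×ˢ ⊤) (𝓝 0) := by
  have hframe (c : Fin 2) := isBoundedUnder_norm_polarFrame (l := atTop ×ˢ ⊤)
    (Prod.snd : ℝ × ℝ → ℝ) c
  have hframe' (c : Fin 2) := isBoundedUnder_norm_polarFrame (l := atTop ×ˢ ⊤)
    (fun x : ℝ × ℝ => x.2 + π / 2) c
  have hmetric := tendsto_innerG_zero (hh.tendsto_metDeriv_circleC 1) (hframe a) (hframe b)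
  have hleft := tendsto_innerG_zero hh.tendsto_circleC (hframe' a) (hframe b)
  have hright := tendsto_innerG_zero hh.tendsto_circleC (hframe a) (hframe' b)
  have hlim := (hmetric.add hleft).add hright
  rw [add_zero, add_zero] at hlim
  refine hlim.congr' ?_
  filter_upwards [tendsto_fst.eventually_gt_atTop 1] with x hx
  exact (hasDerivAt_polarCoeff_angle (hdiff _ (circleC_mem_extSet hx x.2)) a b).deriv.symm

section AsymptoticallyConical

variable {g : Met} {P : ℝ}

lemma differentiableAt_sub_coneMetric
    (hdiff : ∀ i j, DifferentiableOn ℝ (fun p => g p i j) ExtSet) {p : Pt} (hp : p ∈ ExtSet)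
    (i j : Fin 2) : DifferentiableAt ℝ (fun q => (g q - coneMetric P q) i j) p :=
  ((hdiff i j).differentiableAt (isOpen_extSet.mem_nhds hp)).sub
    (differentiableAt_coneMetric (Real.sqrt_ne_zero'.1 (one_pos.trans hp).ne').ne' i j)

lemma tendsto_polarCoeff (hdecay : IsLittleO1Decay fun p => g p - coneMetric P p) (a b : Fin 2) :
    Tendsto (fun x : ℝ × ℝ => polarCoeff g a b x.1 x.2) (atTop ×ˢ ⊤)
      (𝓝 (Matrix.diagonal ![1, P ^ 2] a b)) := by
  have hlim := (hdecay.tendsto_polarCoeff a b).add_const (Matrix.diagonal ![1, P ^ 2] a b)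
  rw [zero_add] at hlim
  refine hlim.congr' ?_
  filter_upwards [tendsto_fst.eventually_ne_atTop 0] with x hx
  rw [polarCoeff_sub_coneMetric g hx, sub_add_cancel]

lemma tendsto_mul_deriv_polarCoeff_radius
    (hdiff : ∀ i j, DifferentiableOn ℝ (fun p => g p i j) ExtSet)
    (hdecay : IsLittleO1Decay fun p => g p - coneMetric P p) (a b : Fin 2) :
    Tendsto (fun x : ℝ × ℝ => x.1 * deriv (fun ρ => polarCoeff g a b ρ x.2) x.1)
      (atTop ×ˢ ⊤) (𝓝 0) := by
  refine (hdecay.tendsto_mul_deriv_polarCoeff_radius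
    (fun p hp => differentiableAt_sub_coneMetric hdiff hp) a b).congr' ?_
  filter_upwards [tendsto_fst.eventually_ne_atTop 0] with x hx
  rw [deriv_polarCoeff_sub_coneMetric_radius g hx]

lemma tendsto_deriv_polarCoeff_angle
    (hdiff : ∀ i j, DifferentiableOn ℝ (fun p => g p i j) ExtSet)
    (hdecay : IsLittleO1Decay fun p => g p - coneMetric P p) (a b : Fin 2) :
    Tendsto (fun x : ℝ × ℝ => deriv (fun s => polarCoeff g a b x.1 s) x.2)
      (atTop ×ˢ ⊤) (𝓝 0) := by
  refine (hdecay.tendsto_deriv_polarCoeff_angle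
    (fun p hp => differentiableAt_sub_coneMetric hdiff hp) a b).congr' ?_
  filter_upwards [tendsto_fst.eventually_ne_atTop 0] with x hx
  rw [deriv_polarCoeff_sub_coneMetric_angle g hx]

lemma tendsto_geodCurv_mul_speedG_circleC (hP : 0 < P)
    (hdiff : ∀ i j, DifferentiableOn ℝ (fun p => g p i j) ExtSet)
    (hpos : ∀ p ∈ ExtSet, (g p).PosDef)
    (hdecay : IsLittleO1Decay fun p => g p - coneMetric P p) :
    Tendsto (fun x : ℝ × ℝ => geodCurv g (circleC x.1) x.2 * speedG g (circleC x.1) x.2)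
      (atTop ×ˢ ⊤) (𝓝 P) := by
  have hcoeff := tendsto_polarCoeff hdecay
  have hradius := tendsto_mul_deriv_polarCoeff_radius hdiff hdecay 1 1
  have hangle := tendsto_deriv_polarCoeff_angle hdiff hdecay
  have hG := hcoeff 1 1
  have hF := hcoeff 0 1
  have hdet := ((hcoeff 0 0).mul hG).sub (hF.mul (hcoeff 1 0))
  simp only [diagonal_apply_eq, cons_val_one, cons_val_zero, one_mul,
    diagonal_apply_ne _ zero_ne_one, diagonal_apply_ne _ one_ne_zero, mul_zero, sub_zero]
    at hG hF hdet
  have hlim := (((hG.add (hradius.div_const 2)).sub (hangle 0 1)).add ((hF.mul (hangle 1 1)).div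
    (hG.const_mul 2) (by positivity))).div hdet.sqrt (by positivity)
  have hvalue : (P ^ 2 + 0 / 2 - 0 + 0 * 0 / (2 * P ^ 2)) / √(P ^ 2) = P := by
    rw [Real.sqrt_sq hP.le]
    field_simp
    ring
  rw [hvalue] at hlim
  refine hlim.congr' ?_
  filter_upwards [tendsto_fst.eventually_gt_atTop 1] with x hx
  have hmem := circleC_mem_extSet hx x.2
  rw [geodCurv_circleC_mul_speedG (one_pos.trans hx).ne'
    (fun i j => (hdiff i j).differentiableAt (isOpen_extSet.mem_nhds hmem)) (hpos _ hmem),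
    det_eq_polarCoeff]
  rfl

end AsymptoticallyConical

lemma tendsto_intervalIntegral_of_tendsto_prod_top {ι E : Type*} [NormedAddCommGroup E]
    [NormedSpace ℝ E] [CompleteSpace E] {l : Filter ι} [l.IsCountablyGenerated] {f : ι → ℝ → E}
    {c : E} (a b : ℝ)
    (hmeas : ∀ᶠ n in l, AEStronglyMeasurable (f n) (volume.restrict (Set.uIoc a b)))
    (hf : Tendsto (fun x : ι × ℝ => f x.1 x.2) (l ×ˢ ⊤) (𝓝 c)) :
    Tendsto (fun n => ∫ t in a..b, f n t) l (𝓝 ((b - a) • c)) := by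
  have hpointwise (t : ℝ) : Tendsto (fun n => f n t) l (𝓝 c) :=
    hf.comp (tendsto_id.prodMk tendsto_top)
  have hbound : ∀ᶠ n in l, ∀ t, ‖f n t‖ ≤ ‖c‖ + 1 := by
    have hnorm := hf.norm.eventually_le_const (lt_add_one ‖c‖)
    rw [prod_top, eventually_comap] at hnorm
    exact hnorm.mono fun n hn t => hn (n, t) rfl
  rw [← intervalIntegral.integral_const]
  exact intervalIntegral.tendsto_integral_filter_of_dominated_convergence (fun _ => ‖c‖ + 1)
    hmeas (hbound.mono fun n hn => .of_forall fun t _ => hn t) intervalIntegrable_const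
    (.of_forall fun t _ => hpointwise t)

theorem total_geodesic_curvature_tendsto_general (g : Met) (P : ℝ) (hP : 0 < P)
    (hdiff : ∀ i j, DifferentiableOn ℝ (fun p => g p i j) ExtSet)
    (hpos : ∀ p ∈ ExtSet, (g p).PosDef)
    (hdecay : IsLittleO1Decay fun p => g p - coneMetric P p) :
    Tendsto (fun R => totalGeodCurv g (circleC R) 0 (2 * π)) atTop (𝓝 (2 * π * P)) := by
  have hmeas : ∀ᶠ R in atTop, Measurable fun t =>
      geodCurv g (circleC R) t * speedG g (circleC R) t := by
    filter_upwards [eventually_gt_atTop 1] with R hR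
    have hcircle : Continuous (circleC R) :=
      continuous_iff_continuousAt.2 fun t => (hasDerivAt_circleC R t).continuousAt
    exact measurable_geodCurv_mul_speedG hcircle.measurable fun i j =>
      ((hdiff i j).continuousOn.comp_continuous hcircle (circleC_mem_extSet hR)).measurable
  have hlim := tendsto_intervalIntegral_of_tendsto_prod_top 0 (2 * π)
    (hmeas.mono fun R hR => hR.aestronglyMeasurable)
    (tendsto_geodCurv_mul_speedG_circleC hP hdiff hpos hdecay)
  rwa [sub_zero, smul_eq_mul] at hlim

/-- For a metric `g` on `ℝ² \ B̄(0,1)` asymptotic to the flat cone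
metric of parameter `P > 0` with error in `O₂(r^{-2ε})`, the total geodesic curvature
of the circle of radius `R` tends to `2πP` as `R → ∞`. -/
theorem total_geodesic_curvature_tendsto (g : Met) (P ε : ℝ)
    (hP : 0 < P) (hε : 0 < ε) (hg : IsMetricOn g ExtSet)
    (hdecay : IsO2Decay (fun p => g p - coneMetric P p) ε 1) :
    Filter.Tendsto (fun R => totalGeodCurv g (circleC R) 0 (2 * π))
      Filter.atTop (nhds (2 * π * P)) :=
  total_geodesic_curvature_tendsto_general g P hP
    (fun i j => (hg.1 i j).differentiableOn (by simp)) (fun p hp => (hg.2 p hp).2)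
    (hdecay.isLittleO1Decay hε)

end
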